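/- arXiv:1302.0271 — 4 statements merged into one kernel-verified Lean document; each statement's English description precedes it below -/
import Mathlib

section
/- Let k ≥ 1 be an integer, α = (1+√(1+4/k))/2, β = kα+1, a_n = ⌊nα⌋, b_n = ⌊nβ⌋, and let S̄_k = {(x,y) ∈ ℕ² : ∃ n ∈ ℕ, {x,y} = {a_n,b_n}}. Define P : ℕ×ℕ → Prop by well-founded recursion on x+y: P(x,y) holds if and only if every legal Γ_k-move from (x,y) leads to a position (x',y') for which P(x',y') fails. Then for all (x,y) ∈ ℕ², P(x,y) holds if and only if (x,y) ∈ S̄_k. (That is, the set of P-positions of the game Γ_k is exactly S̄_k.) -/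
/-- α = (1 + √(1 + 4/k)) / 2 -/
noncomputable def alphaK (k : ℕ) : ℝ := (1 + Real.sqrt (1 + 4 / (k : ℝ))) / 2

/-- β = k·α + 1 -/
noncomputable def betaK (k : ℕ) : ℝ := (k : ℝ) * alphaK k + 1

/-- a_n = ⌊n·α⌋ -/
noncomputable def aSeq (k n : ℕ) : ℤ := ⌊(n : ℝ) * alphaK k⌋

/-- b_n = ⌊n·β⌋ -/
noncomputable def bSeq (k n : ℕ) : ℤ := ⌊(n : ℝ) * betaK k⌋

/-- the pair (f^i_n, g^i_n): (f^i_0,g^i_0) = (0,i+1),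
    (f^i_n, g^i_n) = (f^i_{n−1} + g^i_{n−1}, k·f^i_{n−1} + (k+1)·g^i_{n−1} + i). -/
def fg (k i : ℕ) : ℕ → ℕ × ℕ
  | 0 => (0, i + 1)
  | n + 1 => ((fg k i n).1 + (fg k i n).2,
      k * (fg k i n).1 + (k + 1) * (fg k i n).2 + i)

/-- The moves of the ruleset Γ_k, from position `p` to position `q`
    (positions are pairs of natural numbers, so nonnegativity of the
    resulting coordinates is automatic from the additive formulation). -/
def GammaMove (k : ℕ) (p q : ℕ × ℕ) : Prop :=
  -- Type I: Nim moves
  (∃ n : ℕ, 1 ≤ n ∧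
      ((q.1 + n = p.1 ∧ q.2 = p.2) ∨ (q.1 = p.1 ∧ q.2 + n = p.2))) ∨
  -- Type II: extended diagonal moves, s,t ≥ 1 with |s−t| < k
  (∃ s t : ℕ, 1 ≤ s ∧ 1 ≤ t ∧ s < t + k ∧ t < s + k ∧
      ((q.1 + s = p.1 ∧ q.2 + t = p.2) ∨ (q.1 + t = p.1 ∧ q.2 + s = p.2))) ∨
  -- Type III: extra moves (f^i_n, g^i_n − 1) for 1 ≤ i ≤ k−1, n ≥ 1
  (∃ i n : ℕ, 1 ≤ i ∧ i + 1 ≤ k ∧ 1 ≤ n ∧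
      ((q.1 + (fg k i n).1 = p.1 ∧ q.2 + ((fg k i n).2 - 1) = p.2) ∨
       (q.1 + ((fg k i n).2 - 1) = p.1 ∧ q.2 + (fg k i n).1 = p.2)))

/-- S̄_k = {(x,y) : ∃ n, {x,y} = {a_n, b_n}} -/
def SbarK (k : ℕ) : Set (ℕ × ℕ) :=
  {p | ∃ n : ℕ, ((p.1 : ℤ) = aSeq k n ∧ (p.2 : ℤ) = bSeq k n) ∨
                ((p.1 : ℤ) = bSeq k n ∧ (p.2 : ℤ) = aSeq k n)}

lemma fg_snd_pos (k i : ℕ) : ∀ n, 1 ≤ (fg k i n).2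
  | 0 => by simp [fg]
  | n + 1 => by
      have h := fg_snd_pos k i n
      simp only [fg]
      nlinarith

lemma gammaMove_lt (k : ℕ) (p q : ℕ × ℕ) (h : GammaMove k p q) :
    q.1 + q.2 < p.1 + p.2 := by
  rcases h with ⟨n, hn, hc⟩ | ⟨s, t, hs, ht, _, _, hc⟩ | ⟨i, n, hi, hik, hn, hc⟩
  · rcases hc with ⟨h1, h2⟩ | ⟨h1, h2⟩ <;> omega
  · rcases hc with ⟨h1, h2⟩ | ⟨h1, h2⟩ <;> omega
  · have hf : 1 ≤ (fg k i n).1 := by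
      cases n with
      | zero => omega
      | succ m =>
        have := fg_snd_pos k i m
        simp only [fg]
        omega
    rcases hc with ⟨h1, h2⟩ | ⟨h1, h2⟩ <;> omega

/-- P-positions of Γ_k, defined by well-founded recursion on x+y:
    P(x,y) iff every legal Γ_k-move from (x,y) leads to a non-P position. -/
def Ppos (k : ℕ) (p : ℕ × ℕ) : Prop :=
  ∀ q : ℕ × ℕ, GammaMove k p q → ¬ Ppos k q
termination_by p.1 + p.2
decreasing_by exact gammaMove_lt k p q (by assumption)

/-!
Write `i = residue k n`, so that `b_n = k a_n + n + i` with `0 ≤ i < k`. From `n` to `n + 1` the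
difference `b_n - a_n` grows by `k`, or by `k + 1`, and then `residue k (n + 1)` is positive. As in
Wythoff's game, a position outside `S̄_k` is therefore sent into `S̄_k` by a move of type I or II,
except possibly the positions `(a_n, b_n - 1)` with `residue k n > 0`.

These are handled by the moves of type III. The key identity is
`(f^i_{j+1}, g^i_{j+1}) = (a_N, b_N)` with `N = g^i_j`. The numbers `g^i_j` are the successive
minimisers of `k {nα} - i ≥ 0`, so if `g^i_j ≤ n < g^i_{j+1}` and `residue k n = i`, then
`{Nα} ≤ {nα}` for `N = g^i_j`. Hence `(a_n, b_n)` is the sum of `(a_m, b_m)` and `(a_N, b_N)`, where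
`m = n - N`. Conversely, superadditivity of `b` and monotonicity of `b_n - a_n` rule out a move by
`(a_N, b_N - 1)` inside `S̄_k`.
-/

section Constants

variable {k : ℕ}

lemma mul_alphaK_sq (hk : 1 ≤ k) : (k : ℝ) * alphaK k ^ 2 = k * alphaK k + 1 := by
  have hk' : (k : ℝ) ≠ 0 := by positivity
  have hsqrt : √(1 + 4 / (k : ℝ)) ^ 2 = 1 + 4 / k := Real.sq_sqrt (by positivity)
  have hcancel : (k : ℝ) * (4 / k) = 4 := mul_div_cancel₀ 4 hk'
  unfold alphaK
  linear_combination (k : ℝ) / 4 * hsqrt + hcancel / 4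

lemma one_lt_alphaK (hk : 1 ≤ k) : 1 < alphaK k := by
  have hsqrt : 1 < √(1 + 4 / (k : ℝ)) := by
    rw [Real.lt_sqrt zero_le_one, one_pow]
    exact lt_add_of_pos_right 1 (by positivity)
  unfold alphaK
  linarith

lemma mul_alphaK_lt (hk : 1 ≤ k) : k * alphaK k < k + 1 := by
  have hinv : k * (alphaK k - 1) * alphaK k = 1 := by linear_combination mul_alphaK_sq hk
  have hα := one_lt_alphaK hk
  nlinarith

lemma lt_mul_alphaK (hk : 1 ≤ k) : k < k * alphaK k :=
  lt_mul_of_one_lt_right (by positivity) (one_lt_alphaK hk)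

lemma one_lt_betaK (hk : 1 ≤ k) : 1 < betaK k :=
  lt_add_of_pos_left 1 ((Nat.cast_nonneg k).trans_lt (lt_mul_alphaK hk))

lemma irrational_alphaK (hk : 1 ≤ k) : Irrational (alphaK k) := by
  rintro ⟨q, hq⟩
  have hquad : (k : ℚ) * q ^ 2 = k * q + 1 := by
    have h := mul_alphaK_sq hk
    rw [← hq] at h
    exact_mod_cast h
  have hdisc : IsSquare ((k ^ 2 + 4 * k : ℕ) : ℚ) :=
    ⟨2 * k * q - k, by push_cast; linear_combination -4 * (k : ℚ) * hquad⟩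
  obtain ⟨r, hr⟩ := Rat.isSquare_natCast_iff.mp hdisc
  exact Nat.not_exists_sq (m := k + 1) (by nlinarith) (by nlinarith) ⟨r, hr.symm⟩

lemma holderConjugate_alphaK_betaK (hk : 1 ≤ k) : (alphaK k).HolderConjugate (betaK k) := by
  have hα := one_lt_alphaK hk
  have hβ : betaK k = k * alphaK k ^ 2 := (mul_alphaK_sq hk).symm
  refine Real.holderConjugate_iff.mpr ⟨hα, ?_⟩
  rw [hβ]
  field_simp
  linear_combination -mul_alphaK_sq hk

end Constants

section Beatty

lemma floor_natCast_add_mul_mem_Icc (x : ℝ) (m n : ℕ) :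
    ⌊((m + n : ℕ) : ℝ) * x⌋ ∈ Set.Icc (⌊m * x⌋ + ⌊n * x⌋) (⌊m * x⌋ + ⌊n * x⌋ + 1) := by
  rw [Nat.cast_add, add_mul]
  have hlow := Int.le_floor_add (m * x) (n * x)
  have hupp := Int.le_floor_add_floor (m * x) (n * x)
  exact ⟨hlow, by linarith⟩

lemma exists_pos_beattySeq_eq_iff {r : ℝ} {z : ℤ} (hz : 0 < z) :
    (∃ j > 0, beattySeq r j = z) ↔ ∃ n : ℕ, ⌊n * r⌋ = z := by
  constructor
  · rintro ⟨j, hj, rfl⟩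
    lift j to ℕ using hj.le
    exact ⟨j, by simp [beattySeq]⟩
  · rintro ⟨n, rfl⟩
    have hn : n ≠ 0 := by
      rintro rfl
      simp at hz
    exact ⟨n, by positivity, by simp [beattySeq]⟩

variable {k : ℕ}

lemma xor_exists_aSeq_bSeq (hk : 1 ≤ k) {z : ℤ} (hz : 0 < z) :
    Xor (∃ n, aSeq k n = z) (∃ n, bSeq k n = z) := by
  have hmem : z ∈ {z : ℤ | 0 < z} := hz
  rw [← (irrational_alphaK hk).beattySeq_symmDiff_beattySeq_pos (holderConjugate_alphaK_betaK hk),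
    Set.mem_symmDiff] at hmem
  simpa only [Set.mem_ofPred_eq, exists_pos_beattySeq_eq_iff hz] using! hmem

end Beatty

section Residue

variable {k : ℕ}

/-- The `i` for which `(a_n, b_n) = (a_n, k a_n + n + i)`, encoded as `⌊k {nα}⌋`. -/
noncomputable def residue (k n : ℕ) : ℕ := ⌊k * Int.fract (n * alphaK k)⌋₊

/-- The amount by which `k (nα - a)` exceeds `i`. For `i < k` it lies in `[0, 1)` exactly when
`a = a_n` and `i` is the residue of `n`. -/
noncomputable def excess (k i : ℕ) (n a : ℤ) : ℝ := k * (n * alphaK k - a) - i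

lemma residue_lt (hk : 1 ≤ k) (n : ℕ) : residue k n < k := by
  have hk' : (0 : ℝ) < k := by positivity
  exact (Nat.floor_lt (mul_nonneg hk'.le (Int.fract_nonneg _))).mpr
    (mul_lt_of_lt_one_right hk' (Int.fract_lt_one _))

lemma residue_zero (k : ℕ) : residue k 0 = 0 := by simp [residue]

lemma excess_residue_nonneg (k n : ℕ) : 0 ≤ excess k (residue k n) n (aSeq k n) :=
  sub_nonneg.mpr (Nat.floor_le (mul_nonneg (Nat.cast_nonneg k) (Int.fract_nonneg _)))

lemma excess_residue_lt_one (k n : ℕ) : excess k (residue k n) n (aSeq k n) < 1 :=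
  sub_lt_iff_lt_add'.mpr (Nat.lt_floor_add_one _)

lemma aSeq_eq_and_bSeq_eq_of_excess {i n : ℕ} {a : ℤ} (hi : i < k)
    (hnonneg : 0 ≤ excess k i n a) (hlt : excess k i n a < 1) :
    aSeq k n = a ∧ bSeq k n = k * a + n + i := by
  have hi' : (i : ℝ) + 1 ≤ k := by exact_mod_cast hi
  simp only [excess, Int.cast_natCast] at hnonneg hlt
  constructor
  · refine Int.floor_eq_iff.mpr ⟨?_, ?_⟩ <;> nlinarith
  · refine Int.floor_eq_iff.mpr ⟨?_, ?_⟩ <;> unfold betaK <;> push_cast <;> linarith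

lemma bSeq_eq (hk : 1 ≤ k) (n : ℕ) : bSeq k n = k * aSeq k n + n + residue k n :=
  (aSeq_eq_and_bSeq_eq_of_excess (residue_lt hk n) (excess_residue_nonneg k n)
    (excess_residue_lt_one k n)).2

end Residue

section Growth

variable {k : ℕ}

lemma aSeq_zero (k : ℕ) : aSeq k 0 = 0 := by simp [aSeq]

lemma bSeq_zero (k : ℕ) : bSeq k 0 = 0 := by simp [bSeq]

lemma aSeq_one (hk : 1 ≤ k) : aSeq k 1 = 1 := by
  have hα := one_lt_alphaK hk
  have hkα := mul_alphaK_lt hk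
  have hk' : (1 : ℝ) ≤ k := by exact_mod_cast hk
  refine Int.floor_eq_iff.mpr ⟨?_, ?_⟩ <;> push_cast <;> nlinarith

lemma bSeq_one (hk : 1 ≤ k) : bSeq k 1 = k + 1 := by
  have hlt := mul_alphaK_lt hk
  have hgt := lt_mul_alphaK hk
  refine Int.floor_eq_iff.mpr ⟨?_, ?_⟩ <;> unfold betaK <;> push_cast <;> linarith

lemma aSeq_succ_mem_Icc (hk : 1 ≤ k) (n : ℕ) :
    aSeq k (n + 1) ∈ Set.Icc (aSeq k n + 1) (aSeq k n + 2) := by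
  obtain ⟨hlow, hupp⟩ : aSeq k (n + 1) ∈ Set.Icc (aSeq k n + aSeq k 1) (aSeq k n + aSeq k 1 + 1) :=
    floor_natCast_add_mul_mem_Icc (alphaK k) n 1
  rw [aSeq_one hk] at hlow hupp
  exact ⟨hlow, by omega⟩

lemma bSeq_succ_mem_Icc (hk : 1 ≤ k) (n : ℕ) :
    bSeq k (n + 1) ∈ Set.Icc (bSeq k n + k + 1) (bSeq k n + k + 2) := by
  obtain ⟨hlow, hupp⟩ : bSeq k (n + 1) ∈ Set.Icc (bSeq k n + bSeq k 1) (bSeq k n + bSeq k 1 + 1) :=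
    floor_natCast_add_mul_mem_Icc (betaK k) n 1
  rw [bSeq_one hk] at hlow hupp
  exact ⟨by omega, by omega⟩

lemma strictMono_aSeq (hk : 1 ≤ k) : StrictMono (aSeq k) :=
  strictMono_nat_of_lt_succ fun n => Int.add_one_le_iff.mp (aSeq_succ_mem_Icc hk n).1

lemma strictMono_bSeq (hk : 1 ≤ k) : StrictMono (bSeq k) :=
  strictMono_nat_of_lt_succ fun n => by
    have := (bSeq_succ_mem_Icc hk n).1
    omega

lemma bSeq_sub_aSeq_succ (hk : 1 ≤ k) (n : ℕ) :
    bSeq k (n + 1) - aSeq k (n + 1) = bSeq k n - aSeq k n + k ∨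
      bSeq k (n + 1) - aSeq k (n + 1) = bSeq k n - aSeq k n + k + 1 ∧ 0 < residue k (n + 1) := by
  obtain ⟨ha, ha'⟩ := aSeq_succ_mem_Icc hk n
  obtain ⟨hb, hb'⟩ := bSeq_succ_mem_Icc hk n
  have hn := bSeq_eq hk n
  have hsucc := bSeq_eq hk (n + 1)
  have hlt := residue_lt hk n
  push_cast at hsucc
  obtain hstep | hstep : aSeq k (n + 1) = aSeq k n + 1 ∨ aSeq k (n + 1) = aSeq k n + 2 := by omega
  all_goals
    rw [hstep, mul_add] at hsucc
    omega

lemma monotone_bSeq_sub_aSeq (hk : 1 ≤ k) : Monotone fun n => bSeq k n - aSeq k n :=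
  monotone_nat_of_le_succ fun n => by
    have := bSeq_sub_aSeq_succ hk n
    omega

lemma bSeq_sub_aSeq_add_le (hk : 1 ≤ k) {m n : ℕ} (h : m < n) :
    bSeq k m - aSeq k m + k ≤ bSeq k n - aSeq k n := by
  have hstep := bSeq_sub_aSeq_succ hk m
  have hle : bSeq k (m + 1) - aSeq k (m + 1) ≤ bSeq k n - aSeq k n := monotone_bSeq_sub_aSeq hk h
  omega

lemma le_bSeq_sub_aSeq (hk : 1 ≤ k) {n : ℕ} (hn : 0 < n) : k ≤ bSeq k n - aSeq k n := by
  simpa [aSeq_zero, bSeq_zero] using bSeq_sub_aSeq_add_le hk hn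

lemma aSeq_nonneg (hk : 1 ≤ k) (n : ℕ) : 0 ≤ aSeq k n :=
  (aSeq_zero k).symm.trans_le ((strictMono_aSeq hk).monotone n.zero_le)

lemma aSeq_le_bSeq (hk : 1 ≤ k) (n : ℕ) : aSeq k n ≤ bSeq k n := by
  have hn := bSeq_eq hk n
  have hle : aSeq k n ≤ k * aSeq k n :=
    le_mul_of_one_le_left (aSeq_nonneg hk n) (by exact_mod_cast hk)
  omega

lemma aSeq_eq_bSeq_iff (hk : 1 ≤ k) {m n : ℕ} : aSeq k n = bSeq k m ↔ n = 0 ∧ m = 0 := by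
  refine ⟨fun h => ?_, fun ⟨hn, hm⟩ => by rw [hn, hm, aSeq_zero, bSeq_zero]⟩
  obtain hpos | hzero := (aSeq_nonneg hk n).lt_or_eq
  · rcases xor_exists_aSeq_bSeq hk hpos with ⟨-, hb⟩ | ⟨-, ha⟩
    · exact absurd ⟨m, h.symm⟩ hb
    · exact absurd ⟨n, rfl⟩ ha
  · exact ⟨(strictMono_aSeq hk).injective (hzero.symm.trans (aSeq_zero k).symm),
      (strictMono_bSeq hk).injective (by rw [← h, ← hzero, bSeq_zero])⟩

lemma exists_eq_aSeq_or_eq_bSeq (hk : 1 ≤ k) (x : ℕ) :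
    ∃ n, (x : ℤ) = aSeq k n ∨ (x : ℤ) = bSeq k n := by
  obtain rfl | hx := x.eq_zero_or_pos
  · exact ⟨0, .inl (aSeq_zero k).symm⟩
  · rcases Xor.or (xor_exists_aSeq_bSeq hk (Int.natCast_pos.mpr hx)) with ⟨n, h⟩ | ⟨n, h⟩
    · exact ⟨n, .inl h.symm⟩
    · exact ⟨n, .inr h.symm⟩

lemma exists_natCast_eq_aSeq_bSeq (hk : 1 ≤ k) (n : ℕ) :
    ∃ A B : ℕ, (A : ℤ) = aSeq k n ∧ (B : ℤ) = bSeq k n :=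
  ⟨(aSeq k n).toNat, (bSeq k n).toNat, Int.toNat_of_nonneg (aSeq_nonneg hk n),
    Int.toNat_of_nonneg ((aSeq_nonneg hk n).trans (aSeq_le_bSeq hk n))⟩

end Growth

section Descent

variable {k i : ℕ}

lemma betaK_mul_excess_add (hk : 1 ≤ k) (i : ℕ) (n a : ℤ) :
    betaK k * excess k i (n + k * a + i) (a + (n + k * a + i)) = excess k i n a := by
  unfold betaK excess
  push_cast
  linear_combination (k * (n + k * a + i) : ℝ) * mul_alphaK_sq hk

lemma le_of_excess_add_lt (hk : 1 ≤ k) {n a : ℤ} (hn : 0 < n)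
    (h : excess k i n a + i < k * alphaK k) : n ≤ a := by
  have hα := one_lt_alphaK hk
  have hn' : (1 : ℝ) ≤ n := by exact_mod_cast hn
  have hlt : n * alphaK k - a < alphaK k := by
    unfold excess at h
    exact lt_of_mul_lt_mul_left (by linarith) k.cast_nonneg
  have : (n : ℝ) < a + 1 := by nlinarith
  exact Int.lt_add_one_iff.mp (by exact_mod_cast this)

/-- The excess `k {g^i_j α} - i`, a sequence decreasing geometrically with ratio `1 / β`. -/
noncomputable def fgExcess (k i j : ℕ) : ℝ := excess k i (fg k i j).2 (fg k i (j + 1)).1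

lemma fg_snd_succ (k i j : ℕ) :
    (fg k i (j + 1)).2 = (fg k i j).2 + k * (fg k i (j + 1)).1 + i := by
  simp only [fg]
  ring

lemma lt_fg_snd (k : ℕ) (hi : 0 < i) (j : ℕ) : j < (fg k i j).2 := by
  induction j with
  | zero => exact i.succ_pos
  | succ j ih =>
    rw [fg_snd_succ]
    omega

lemma betaK_mul_fgExcess_succ (hk : 1 ≤ k) (i j : ℕ) :
    betaK k * fgExcess k i (j + 1) = fgExcess k i j := by
  have h := betaK_mul_excess_add hk i (fg k i j).2 (fg k i (j + 1)).1
  rwa [show ((fg k i j).2 + k * (fg k i (j + 1)).1 + i : ℤ) = (fg k i (j + 1)).2 by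
    rw [fg_snd_succ]; push_cast; rfl] at h

lemma alphaK_mul_fgExcess_zero (hk : 1 ≤ k) (i : ℕ) :
    alphaK k * fgExcess k i 0 = i + 1 - i * alphaK k := by
  simp only [fgExcess, excess, fg]
  push_cast
  linear_combination (i + 1 : ℝ) * mul_alphaK_sq hk

lemma fgExcess_pos (hi : i < k) (j : ℕ) : 0 < fgExcess k i j := by
  have hk : 1 ≤ k := by omega
  have hα := one_lt_alphaK hk
  induction j with
  | zero =>
    have hi' : (i : ℝ) ≤ k := by exact_mod_cast hi.le
    refine pos_of_mul_pos_right ?_ (zero_le_one.trans hα.le)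
    rw [alphaK_mul_fgExcess_zero hk]
    nlinarith [mul_alphaK_lt hk]
  | succ j ih =>
    rw [← betaK_mul_fgExcess_succ hk] at ih
    exact pos_of_mul_pos_right ih (zero_le_one.trans (one_lt_betaK hk).le)

lemma alphaK_mul_fgExcess_le_one (hi : i < k) (j : ℕ) : alphaK k * fgExcess k i j ≤ 1 := by
  have hk : 1 ≤ k := by omega
  have hα := one_lt_alphaK hk
  induction j with
  | zero =>
    rw [alphaK_mul_fgExcess_zero hk]
    nlinarith [i.cast_nonneg (α := ℝ)]
  | succ j ih =>
    refine le_trans ?_ ih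
    rw [← betaK_mul_fgExcess_succ hk i j]
    gcongr
    exact le_mul_of_one_le_left (fgExcess_pos hi _).le (one_lt_betaK hk).le

lemma fgExcess_lt_one (hi : i < k) (j : ℕ) : fgExcess k i j < 1 :=
  (lt_mul_of_one_lt_left (fgExcess_pos hi j) (one_lt_alphaK (by omega))).trans_le
    (alphaK_mul_fgExcess_le_one hi j)

lemma aSeq_bSeq_fg_snd (hi : i < k) (j : ℕ) :
    aSeq k (fg k i j).2 = (fg k i (j + 1)).1 ∧ bSeq k (fg k i j).2 = (fg k i (j + 1)).2 := by
  obtain ⟨ha, hb⟩ := aSeq_eq_and_bSeq_eq_of_excess hi (fgExcess_pos hi j).le (fgExcess_lt_one hi j)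
  refine ⟨ha, hb.trans ?_⟩
  rw [fg_snd_succ]
  push_cast
  ring

lemma succ_le_of_excess_lt (hi : i < k) (hi0 : 0 < i) {n a : ℤ} (hn : 0 < n)
    (hnonneg : 0 ≤ excess k i n a) (hlt : excess k i n a + i < k * alphaK k) : i + 1 ≤ n := by
  have hk : 1 ≤ k := by omega
  have hα := one_lt_alphaK hk
  have hle : (n : ℝ) ≤ a := by exact_mod_cast le_of_excess_add_lt hk hn hlt
  have hi' : (0 : ℝ) < i := by exact_mod_cast hi0
  have hstep : (i : ℝ) ≤ k * n * (alphaK k - 1) := by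
    unfold excess at hnonneg
    nlinarith
  have hmul : i * alphaK k ≤ n := calc
    i * alphaK k ≤ k * n * (alphaK k - 1) * alphaK k := by gcongr
    _ = n := by linear_combination (n : ℝ) * mul_alphaK_sq hk
  have : (i : ℝ) < n := by nlinarith
  exact Int.add_one_le_iff.mpr (by exact_mod_cast this)

lemma fg_fst_succ_le_of_excess_lt (hi : i < k) {j : ℕ} {n a : ℤ} (hn : (fg k i j).2 ≤ n)
    (hlt : excess k i n a < betaK k * fgExcess k i j) : (fg k i (j + 1)).1 ≤ a := by
  have hk : 1 ≤ k := by omega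
  have hα := one_lt_alphaK hk
  have hk' : (0 : ℝ) < k := by positivity
  have hn' : ((fg k i j).2 : ℝ) ≤ n := by exact_mod_cast hn
  have hle := alphaK_mul_fgExcess_le_one hi j
  have hmul : (fg k i j).2 * alphaK k ≤ n * alphaK k := by gcongr
  have hdef : fgExcess k i j = k * ((fg k i j).2 * alphaK k - (fg k i (j + 1)).1) - i := by
    simp only [fgExcess, excess, Int.cast_natCast]
  have : ((fg k i (j + 1)).1 : ℝ) < a + 1 := by
    unfold betaK excess at hlt
    refine lt_of_mul_lt_mul_left ?_ hk'.le
    nlinarith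
  exact Int.lt_add_one_iff.mp (by exact_mod_cast this)

-- Induction on `j`, replacing `(n, a)` by its preimage under the recursion that defines `fg`.
lemma fg_snd_le_of_excess_lt (hi : i < k) (hi0 : 0 < i) (j : ℕ) {n a : ℤ} (hn : 0 < n)
    (hnonneg : 0 ≤ excess k i n a) (hlt : excess k i n a < betaK k * fgExcess k i j) :
    (fg k i j).2 ≤ n := by
  have hk : 1 ≤ k := by omega
  have hkα := lt_mul_alphaK hk
  have hi' : (i : ℝ) + 1 ≤ k := by exact_mod_cast hi
  induction j generalizing n a with
  | zero =>
    have hzero : betaK k * fgExcess k i 0 = k * alphaK k - i := by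
      simp only [betaK, fgExcess, excess, fg]
      push_cast
      linear_combination (k * (i + 1) : ℝ) * mul_alphaK_sq hk
    exact_mod_cast succ_le_of_excess_lt hi hi0 hn hnonneg (by linarith)
  | succ j ih =>
    rw [betaK_mul_fgExcess_succ hk] at hlt
    have hna : n ≤ a := le_of_excess_add_lt (i := i) hk hn (by linarith [fgExcess_lt_one hi j])
    obtain ⟨A, rfl⟩ : ∃ A, a = A + n := ⟨a - n, by ring⟩
    obtain ⟨N, rfl⟩ : ∃ N, n = N + k * A + i := ⟨n - k * A - i, by ring⟩
    have hβ : 0 < betaK k := zero_lt_one.trans (one_lt_betaK hk)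
    have hlt' := mul_lt_mul_of_pos_left hlt hβ
    have hnonneg' := mul_nonneg hβ.le hnonneg
    rw [betaK_mul_excess_add hk] at hlt' hnonneg'
    have hN : 0 < N := by
      have hA : (0 : ℝ) ≤ A := by exact_mod_cast (by omega : 0 ≤ A)
      have hα := one_lt_alphaK hk
      have : (0 : ℝ) < i := by exact_mod_cast hi0
      unfold excess at hnonneg'
      have : (0 : ℝ) < N * (k * alphaK k) := by nlinarith
      exact_mod_cast pos_of_mul_pos_left this (by positivity)
    have hsnd := ih hN hnonneg' hlt'
    have hfst := fg_fst_succ_le_of_excess_lt hi hsnd hlt'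
    rw [fg_snd_succ]
    push_cast
    gcongr

lemma exists_aSeq_bSeq_eq_add_fg (hk : 1 ≤ k) {n : ℕ} (hn : 0 < residue k n) :
    ∃ j m, aSeq k n = aSeq k m + (fg k (residue k n) (j + 1)).1 ∧
      bSeq k n = bSeq k m + (fg k (residue k n) (j + 1)).2 := by
  set i := residue k n with hi_def
  have hi : i < k := residue_lt hk n
  have hnonneg : 0 ≤ excess k i n (aSeq k n) := excess_residue_nonneg k n
  have hlt : excess k i n (aSeq k n) < 1 := excess_residue_lt_one k n
  have hn0 : 0 < (n : ℤ) := by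
    have : n ≠ 0 := by
      rintro rfl
      exact hn.ne' (residue_zero k)
    omega
  have hfirst : ¬ n < (fg k i 0).2 := by
    have hi' : (i : ℝ) + 1 ≤ k := by exact_mod_cast hi
    have := succ_le_of_excess_lt hi hn hn0 hnonneg (by linarith [lt_mul_alphaK hk])
    simp only [fg]
    omega
  obtain ⟨j, hj, hj'⟩ := Nat.exists_not_and_succ_of_not_zero_of_exists
    (p := fun j => n < (fg k i j).2) hfirst ⟨n, lt_fg_snd k hn n⟩
  have hle : fgExcess k i j ≤ excess k i n (aSeq k n) := by
    by_contra! h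
    rw [← betaK_mul_fgExcess_succ hk] at h
    have := fg_snd_le_of_excess_lt hi hn (j + 1) hn0 hnonneg h
    omega
  obtain ⟨m, hm⟩ := Nat.exists_eq_add_of_le (not_lt.mp hj)
  have hsub : excess k 0 m (aSeq k n - (fg k i (j + 1)).1) =
      excess k i n (aSeq k n) - fgExcess k i j := by
    simp only [fgExcess, excess, hm]
    push_cast
    ring
  have hpos := fgExcess_pos hi j
  obtain ⟨ha, hb⟩ := aSeq_eq_and_bSeq_eq_of_excess hk (hsub ▸ sub_nonneg.mpr hle)
    (hsub ▸ by linarith)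
  refine ⟨j, m, by rw [ha]; ring, ?_⟩
  rw [bSeq_eq hk n, hb, fg_snd_succ, ← hi_def, hm]
  push_cast
  ring

end Descent

section Moves

variable {k : ℕ}

lemma GammaMove.swap {p q : ℕ × ℕ} (h : GammaMove k p q) : GammaMove k p.swap q.swap := by
  rcases h with ⟨n, hn, hpq⟩ | ⟨s, t, hs, ht, hst, hts, hpq⟩ | ⟨i, n, hi, hik, hn, hpq⟩
  · exact .inl ⟨n, hn, hpq.symm.imp And.symm And.symm⟩
  · exact .inr (.inl ⟨s, t, hs, ht, hst, hts, hpq.symm.imp And.symm And.symm⟩)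
  · exact .inr (.inr ⟨i, n, hi, hik, hn, hpq.symm.imp And.symm And.symm⟩)

lemma SbarK.swap_mem {p : ℕ × ℕ} (h : p ∈ SbarK k) : p.swap ∈ SbarK k :=
  h.imp fun _ hn => hn.symm.imp And.symm And.symm

lemma GammaMove.vertical (k x : ℕ) {y B : ℕ} (h : B < y) : GammaMove k (x, y) (x, B) :=
  .inl ⟨y - B, by omega, .inr ⟨rfl, Nat.add_sub_of_le h.le⟩⟩

lemma GammaMove.horizontal (k y : ℕ) {x A : ℕ} (h : A < x) : GammaMove k (x, y) (A, y) :=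
  (GammaMove.vertical k y h).swap

lemma GammaMove.diagonal {x y A B : ℕ} (hx : A < x) (hy : B < y) (hlt : y + A < x + B + k)
    (hlt' : x + B < y + A + k) : GammaMove k (x, y) (A, B) :=
  .inr (.inl ⟨x - A, y - B, by omega, by omega, by omega, by omega,
    .inl ⟨Nat.add_sub_of_le hx.le, Nat.add_sub_of_le hy.le⟩⟩)

lemma bSeq_ne_bSeq_add_bSeq_sub_one (hk : 2 ≤ k) (n m N : ℕ) :
    bSeq k n ≠ bSeq k m + bSeq k N - 1 := by
  intro h
  have hk1 : 1 ≤ k := by omega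
  obtain ⟨hlow, hupp⟩ : bSeq k (m + N) ∈ Set.Icc (bSeq k m + bSeq k N) (bSeq k m + bSeq k N + 1) :=
    floor_natCast_add_mul_mem_Icc (betaK k) m N
  have hlt : n < m + N := (strictMono_bSeq hk1).lt_iff_lt.mp (by omega)
  have hstep := (bSeq_succ_mem_Icc hk1 n).1
  have hle : bSeq k (n + 1) ≤ bSeq k (m + N) := (strictMono_bSeq hk1).monotone hlt
  omega

namespace SbarK

lemma eq_of_fst_eq (hk : 1 ≤ k) {p q : ℕ × ℕ} (hp : p ∈ SbarK k) (hq : q ∈ SbarK k)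
    (h : p.1 = q.1) : p = q := by
  obtain ⟨n, ⟨ha, hb⟩ | ⟨hb, ha⟩⟩ := hp <;> obtain ⟨m, ⟨ha', hb'⟩ | ⟨hb', ha'⟩⟩ := hq
  · obtain rfl : n = m := (strictMono_aSeq hk).injective (by omega)
    exact Prod.ext h (by omega)
  · obtain ⟨rfl, rfl⟩ := (aSeq_eq_bSeq_iff hk).mp (show aSeq k n = bSeq k m by omega)
    exact Prod.ext h (by rw [aSeq_zero] at *; rw [bSeq_zero] at *; omega)
  · obtain ⟨rfl, rfl⟩ := (aSeq_eq_bSeq_iff hk).mp (show aSeq k m = bSeq k n by omega)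
    exact Prod.ext h (by rw [aSeq_zero] at *; rw [bSeq_zero] at *; omega)
  · obtain rfl : n = m := (strictMono_bSeq hk).injective (by omega)
    exact Prod.ext h (by omega)

lemma le_abs_sub_of_lt (hk : 1 ≤ k) {p q : ℕ × ℕ} (hp : p ∈ SbarK k) (hq : q ∈ SbarK k)
    (hfst : q.1 < p.1) (hsnd : q.2 < p.2) :
    (k : ℤ) ≤ |((p.2 : ℤ) - p.1) - (q.2 - q.1)| := by
  obtain ⟨m, hm⟩ := hq
  have hle := aSeq_le_bSeq hk m
  rw [le_abs]
  obtain ⟨n, hn⟩ := hp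
  have hn0 : 0 < n := by
    by_contra! h
    obtain rfl : n = 0 := by omega
    rw [aSeq_zero, bSeq_zero] at hn
    omega
  have hdiff := le_bSeq_sub_aSeq hk hn0
  have hmono : m < n → bSeq k m - aSeq k m + k ≤ bSeq k n - aSeq k n := bSeq_sub_aSeq_add_le hk
  rw [← (strictMono_aSeq hk).lt_iff_lt] at hmono
  omega

lemma ne_add_aSeq_bSeq_sub_one (hk : 2 ≤ k) {p q : ℕ × ℕ} (hp : p ∈ SbarK k) (hq : q ∈ SbarK k)
    {N : ℕ} (hN : 0 < N) :
    ((p.1, p.2) : ℤ × ℤ) ≠ (q.1 + aSeq k N, q.2 + (bSeq k N - 1)) := by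
  have hk1 : 1 ≤ k := by omega
  intro h
  obtain ⟨hfst, hsnd⟩ := Prod.mk.inj h
  have hN0 := aSeq_nonneg hk1 N
  have hdiff := le_bSeq_sub_aSeq hk1 hN
  obtain ⟨m, hm⟩ := hq
  have hmle := aSeq_le_bSeq hk1 m
  obtain ⟨n, ⟨ha, hb⟩ | ⟨hb, ha⟩⟩ := hp
  · obtain ⟨-, hb'⟩ | ⟨hb', ha'⟩ := hm
    · exact bSeq_ne_bSeq_add_bSeq_sub_one hk n m N (by omega)
    · have hle : N ≤ n := (strictMono_aSeq hk1).le_iff_le.mp (by omega)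
      have := monotone_bSeq_sub_aSeq hk1 hle
      simp only at this
      omega
  · have hnle := aSeq_le_bSeq hk1 n
    obtain ⟨ha', hb'⟩ | ⟨hb', ha'⟩ := hm
    · omega
    · have hle : m ≤ n := (strictMono_aSeq hk1).le_iff_le.mp (by omega)
      have := monotone_bSeq_sub_aSeq hk1 hle
      simp only at this
      omega

lemma not_gammaMove (hk : 1 ≤ k) {p q : ℕ × ℕ} (hp : p ∈ SbarK k) (hq : q ∈ SbarK k) :
    ¬ GammaMove k p q := by
  intro h
  have hlt := gammaMove_lt k p q h
  have hne : p ≠ q := by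
    rintro rfl
    exact lt_irrefl _ hlt
  rcases h with ⟨s, -, ⟨-, hsnd⟩ | ⟨hfst, -⟩⟩ | ⟨s, t, hs, ht, hst, hts, hpq⟩ |
    ⟨i, j, hi, hik, hj, hpq⟩
  · exact hne (Prod.swap_injective (eq_of_fst_eq hk (swap_mem hp) (swap_mem hq) hsnd.symm))
  · exact hne (eq_of_fst_eq hk hp hq hfst.symm)
  · have := le_abs.mp (le_abs_sub_of_lt hk hp hq (by omega) (by omega))
    omega
  · obtain ⟨j, rfl⟩ := Nat.exists_eq_add_one_of_ne_zero (Nat.one_le_iff_ne_zero.mp hj)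
    obtain ⟨ha, hb⟩ := aSeq_bSeq_fg_snd (Nat.lt_of_succ_le hik) j
    have hk2 : 2 ≤ k := by omega
    have hpos := fg_snd_pos k i (j + 1)
    obtain ⟨hfst, hsnd⟩ | ⟨hfst, hsnd⟩ := hpq
    · exact ne_add_aSeq_bSeq_sub_one hk2 hp hq (fg_snd_pos k i j) (Prod.ext (by omega) (by omega))
    · exact ne_add_aSeq_bSeq_sub_one hk2 (swap_mem hp) (swap_mem hq) (fg_snd_pos k i j)
        (Prod.ext (by simp only [Prod.fst_swap]; omega) (by simp only [Prod.snd_swap]; omega))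

end SbarK

lemma exists_mem_SbarK_gammaMove_of_eq_bSeq_sub_one (hk : 1 ≤ k) {n x y : ℕ}
    (hn : 0 < residue k n) (hx : (x : ℤ) = aSeq k n) (hy : (y : ℤ) = bSeq k n - 1) :
    ∃ q ∈ SbarK k, GammaMove k (x, y) q := by
  obtain ⟨j, m, ha, hb⟩ := exists_aSeq_bSeq_eq_add_fg hk hn
  obtain ⟨A, B, hA, hB⟩ := exists_natCast_eq_aSeq_bSeq hk m
  have hpos := fg_snd_pos k (residue k n) (j + 1)
  refine ⟨(A, B), ⟨m, .inl ⟨hA, hB⟩⟩, .inr (.inr ⟨residue k n, j + 1, hn, residue_lt hk n,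
    Nat.succ_pos j, .inl ⟨?_, ?_⟩⟩)⟩
  · simp only
    omega
  · simp only
    omega

lemma exists_mem_SbarK_gammaMove_of_lt_bSeq (hk : 1 ≤ k) {n x y : ℕ} (hx : (x : ℤ) = aSeq k n)
    (hxy : x ≤ y) (hy : (y : ℤ) < bSeq k n) : ∃ q ∈ SbarK k, GammaMove k (x, y) q := by
  obtain ⟨m, hm, hm'⟩ : ∃ m, ¬ (y : ℤ) - x < bSeq k m - aSeq k m ∧
      (y : ℤ) - x < bSeq k (m + 1) - aSeq k (m + 1) :=
    Nat.exists_not_and_succ_of_not_zero_of_exists (by rw [aSeq_zero, bSeq_zero]; omega)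
      ⟨n, by omega⟩
  have hmn : m < n := (monotone_bSeq_sub_aSeq hk).reflect_lt (by omega)
  have ham : aSeq k m < aSeq k n := strictMono_aSeq hk hmn
  obtain ⟨A, B, hA, hB⟩ := exists_natCast_eq_aSeq_bSeq hk m
  obtain hclose | hfar := lt_or_ge ((y : ℤ) - x) (bSeq k m - aSeq k m + k)
  · exact ⟨(A, B), ⟨m, .inl ⟨hA, hB⟩⟩,
      .diagonal (by omega) (by omega) (by omega) (by omega)⟩
  obtain ⟨hdiff, hres⟩ : (y : ℤ) - x = bSeq k (m + 1) - aSeq k (m + 1) - 1 ∧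
      0 < residue k (m + 1) := by
    have := bSeq_sub_aSeq_succ hk m
    omega
  obtain rfl | hlt := (Nat.add_one_le_iff.mpr hmn).eq_or_lt
  · exact exists_mem_SbarK_gammaMove_of_eq_bSeq_sub_one hk hres hx (by omega)
  obtain ⟨A, B, hA, hB⟩ := exists_natCast_eq_aSeq_bSeq hk (m + 1)
  have ham' : aSeq k (m + 1) < aSeq k n := strictMono_aSeq hk hlt
  have hk2 := residue_lt hk (m + 1)
  refine ⟨(A, B), ⟨m + 1, .inl ⟨hA, hB⟩⟩, ?_⟩
  obtain rfl | hBy : y = B ∨ B < y := by omega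
  · exact .horizontal k y (by omega)
  · exact .diagonal (by omega) hBy (by omega) (by omega)

lemma exists_mem_SbarK_gammaMove_of_le (hk : 1 ≤ k) {x y : ℕ} (hxy : x ≤ y)
    (h : (x, y) ∉ SbarK k) : ∃ q ∈ SbarK k, GammaMove k (x, y) q := by
  obtain ⟨n, hx | hx⟩ := exists_eq_aSeq_or_eq_bSeq hk x <;>
    obtain ⟨A, B, hA, hB⟩ := exists_natCast_eq_aSeq_bSeq hk n
  · rcases lt_trichotomy y B with hy | rfl | hy
    · exact exists_mem_SbarK_gammaMove_of_lt_bSeq hk hx hxy (by omega)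
    · exact absurd ⟨n, .inl ⟨hx, hB⟩⟩ h
    · exact ⟨(x, B), ⟨n, .inl ⟨hx, hB⟩⟩, .vertical k x hy⟩
  · have hle := aSeq_le_bSeq hk n
    obtain rfl | hy : y = A ∨ A < y := by omega
    · exact absurd ⟨n, .inr ⟨hx, hA⟩⟩ h
    · exact ⟨(x, A), ⟨n, .inr ⟨hx, hA⟩⟩, .vertical k x hy⟩

lemma exists_mem_SbarK_gammaMove (hk : 1 ≤ k) {p : ℕ × ℕ} (h : p ∉ SbarK k) :
    ∃ q ∈ SbarK k, GammaMove k p q := by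
  obtain ⟨x, y⟩ := p
  obtain hxy | hyx := le_total x y
  · exact exists_mem_SbarK_gammaMove_of_le hk hxy h
  · obtain ⟨q, hq, hmove⟩ := exists_mem_SbarK_gammaMove_of_le hk hyx (mt SbarK.swap_mem h)
    exact ⟨q.swap, SbarK.swap_mem hq, hmove.swap⟩

lemma ppos_iff_mem_of_kernel {S : Set (ℕ × ℕ)}
    (hindep : ∀ p ∈ S, ∀ q ∈ S, ¬ GammaMove k p q)
    (habsorb : ∀ p ∉ S, ∃ q ∈ S, GammaMove k p q) (p : ℕ × ℕ) : Ppos k p ↔ p ∈ S := by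
  induction hs : p.1 + p.2 using Nat.strong_induction_on generalizing p with
  | _ s ih =>
    have ih' : ∀ q, GammaMove k p q → (Ppos k q ↔ q ∈ S) := fun q hq =>
      ih _ (hs ▸ gammaMove_lt k p q hq) q rfl
    rw [Ppos]
    constructor
    · intro h
      by_contra hp
      obtain ⟨q, hq, hmove⟩ := habsorb p hp
      exact h q hmove ((ih' q hmove).mpr hq)
    · exact fun hp q hmove hq => hindep p hp q ((ih' q hmove).mp hq) hmove

end Moves

/-- The set of P-positions of the game Γ_k is exactly S̄_k. -/
theorem ppositions_eq_Sbar (k : ℕ) (hk : 1 ≤ k) :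
    ∀ p : ℕ × ℕ, Ppos k p ↔ p ∈ SbarK k :=
  ppos_iff_mem_of_kernel (fun _ hp _ hq => SbarK.not_gammaMove hk hp hq)
    fun _ hp => exists_mem_SbarK_gammaMove hk hp
end

section
/- Let k ≥ 1 be an integer, α = (1+√(1+4/k))/2, β = kα+1, a_n = ⌊nα⌋, b_n = ⌊nβ⌋. For all integers m > n ≥ 0 there do not exist integers s,t ≥ 1 with |s−t| < k such that (a_m − s, b_m − t) = (a_n, b_n) or (a_m − s, b_m − t) = (b_n, a_n). (No move of Type II, i.e., no k-Wythoff Nim move, connects two positions of the form (a_m,b_m).) -/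
/-!
Let `d_n = b_n - a_n`. With `x = n α` we have `d_n = n + (⌊k x⌋ - ⌊x⌋)`. Since
`⌊k x⌋ - ⌊x⌋ = q - ⌊q / k⌋` for `q = ⌊k x⌋`, the function `x ↦ ⌊k x⌋ - ⌊x⌋` is nondecreasing,
and it grows by `k - 1` when `x` grows by `1`. As `α ≥ 1`, this gives `d_m ≥ d_n + k ≥ k` for
`m > n`. Removing `(s, t)` from `(a_m, b_m)` to reach `(a_n, b_n)` or `(b_n, a_n)` requires
`t - s = d_m - d_n` or `t - s = d_m + d_n`, hence `t - s ≥ k`.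
-/

theorem monotone_sub_ediv {k : ℤ} (hk : 0 < k) : Monotone fun q : ℤ ↦ q - q / k := by
  refine monotone_int_of_le_succ fun q ↦ ?_
  have hstep : (q + 1) / k ≤ q / k + 1 :=
    calc (q + 1) / k ≤ (q + k) / k := Int.ediv_le_ediv hk (by lia)
      _ = q / k + 1 := by simp [Int.add_ediv_of_dvd_right, hk.ne']
  linarith

section FloorGap

variable {K : Type*} [CommRing K] [LinearOrder K] [IsStrictOrderedRing K] [FloorRing K]

/-- The function `x ↦ ⌊k x⌋ - ⌊x⌋`, equal to `b_n - a_n - n` at `x = n α`. -/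
def floorGap (k : ℕ) (x : K) : ℤ := ⌊(k : K) * x⌋ - ⌊x⌋

theorem floorGap_eq_sub_ediv {k : ℕ} (hk : 1 ≤ k) (x : K) :
    floorGap k x = ⌊(k : K) * x⌋ - ⌊(k : K) * x⌋ / k := by
  rw [Int.natCast_mul_floor_div_cancel (by lia), floorGap]

theorem monotone_floorGap {k : ℕ} (hk : 1 ≤ k) : Monotone (floorGap k : K → ℤ) := by
  intro x y hxy
  have hfloor : ⌊(k : K) * x⌋ ≤ ⌊(k : K) * y⌋ := by gcongr
  rw [floorGap_eq_sub_ediv hk, floorGap_eq_sub_ediv hk]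
  exact monotone_sub_ediv (mod_cast hk) hfloor

theorem floorGap_add_one (k : ℕ) (x : K) : floorGap k (x + 1) = floorGap k x + k - 1 := by
  unfold floorGap
  rw [mul_add_one, Int.floor_add_natCast, Int.floor_add_one]
  ring

theorem floorGap_nonneg {k : ℕ} (hk : 1 ≤ k) {x : K} (hx : 0 ≤ x) : 0 ≤ floorGap k x := by
  simpa [floorGap] using monotone_floorGap hk hx

theorem floor_natCast_mul_sub_floor_natCast_mul (k n : ℕ) (α : K) :
    ⌊(n : K) * (k * α + 1)⌋ - ⌊(n : K) * α⌋ = n + floorGap k ((n : K) * α) := by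
  rw [show (n : K) * (k * α + 1) = k * (n * α) + n by ring, Int.floor_add_natCast, floorGap]
  ring

theorem natCast_add_floorGap_add_le {k : ℕ} (hk : 1 ≤ k) {α : K} (hα : 1 ≤ α) {m n : ℕ}
    (hmn : n < m) :
    n + floorGap k ((n : K) * α) + k ≤ m + floorGap k ((m : K) * α) := by
  have hstep : (n : K) * α + 1 ≤ m * α :=
    calc (n : K) * α + 1 ≤ n * α + α := by gcongr
      _ = (n + 1 : ℕ) * α := by push_cast; ring
      _ ≤ m * α := by gcongr; exact hmn
  have hgap : floorGap k ((n : K) * α) + k - 1 ≤ floorGap k ((m : K) * α) :=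
    (floorGap_add_one k _).symm.trans_le (monotone_floorGap hk hstep)
  lia

theorem no_typeII_move_P_to_P_general {k : ℕ} (hk : 1 ≤ k) {α : K} (hα : 1 ≤ α) {m n : ℕ}
    (hmn : n < m) :
    ¬ ∃ s t : ℤ, t - s < k ∧
      ((⌊(m : K) * α⌋ - s = ⌊(n : K) * α⌋ ∧
          ⌊(m : K) * (k * α + 1)⌋ - t = ⌊(n : K) * (k * α + 1)⌋) ∨
       (⌊(m : K) * α⌋ - s = ⌊(n : K) * (k * α + 1)⌋ ∧
          ⌊(m : K) * (k * α + 1)⌋ - t = ⌊(n : K) * α⌋)) := by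
  rintro ⟨s, t, hst, hmove⟩
  have hdiff_m := floor_natCast_mul_sub_floor_natCast_mul k m α
  have hdiff_n := floor_natCast_mul_sub_floor_natCast_mul k n α
  have hgrowth := natCast_add_floorGap_add_le hk hα hmn
  have hnonneg : 0 ≤ floorGap k ((n : K) * α) := floorGap_nonneg hk (by positivity)
  suffices hle : (k : ℤ) ≤ t - s from hst.not_ge hle
  rcases hmove with ⟨ha, hb⟩ | ⟨ha, hb⟩
  · calc (k : ℤ)
        ≤ (m + floorGap k ((m : K) * α)) - (n + floorGap k ((n : K) * α)) := by linarith
      _ = t - s := by linarith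
  · calc (k : ℤ)
        ≤ (m + floorGap k ((m : K) * α)) + (n + floorGap k ((n : K) * α)) := by linarith
      _ = t - s := by linarith

end FloorGap

theorem one_le_alphaK (k : ℕ) : 1 ≤ alphaK k := by
  have hsqrt : 1 ≤ Real.sqrt (1 + 4 / (k : ℝ)) :=
    Real.one_le_sqrt.mpr (le_add_of_nonneg_right (by positivity))
  unfold alphaK
  linarith

/-- No move of Type II (k-Wythoff Nim move) connects two positions
    of the form (a_m, b_m). -/
theorem no_typeII_move_P_to_P (k : ℕ) (hk : 1 ≤ k) (m n : ℕ) (hmn : n < m) :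
    ¬ ∃ s t : ℤ, 1 ≤ s ∧ 1 ≤ t ∧ |s - t| < (k : ℤ) ∧
      ((aSeq k m - s = aSeq k n ∧ bSeq k m - t = bSeq k n) ∨
       (aSeq k m - s = bSeq k n ∧ bSeq k m - t = aSeq k n)) := by
  rintro ⟨s, t, -, -, hst, hmove⟩
  exact no_typeII_move_P_to_P_general hk (one_le_alphaK k) hmn
    ⟨s, t, (abs_sub_lt_iff.mp hst).2, hmove⟩
end

section
/- Let k ≥ 1 be an integer, α = (1+√(1+4/k))/2, β = kα+1, a_n = ⌊nα⌋, b_n = ⌊nβ⌋, c_n = a_n − a_{n−1}, d_n = b_n − b_{n−1}. Suppose p ≥ 1 and q > p satisfy c_p = c_q = 2 and c_j = 1 for all p < j < q (so q is the minimal index above p with c-value 2). Then the number of indices j with p < j < q and d_j = k+2 is exactly k−1. -/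
/-- c_n = a_n − a_{n−1} (used for n ≥ 1) -/
noncomputable def cSeq (k n : ℕ) : ℤ := aSeq k n - aSeq k (n - 1)

/-- d_n = b_n − b_{n−1} (used for n ≥ 1) -/
noncomputable def dSeq (k n : ℕ) : ℤ := bSeq k n - bSeq k (n - 1)

/-!
The fractional part `{nα}` controls both sequences: it lies below `α - 1 ≤ 1 / k` when the Beatty
sequence of `α` has just jumped by `2`, and is at least `2 - α ≥ 1 - 1 / k` when it is about to do
so. Since `⌊n(kα + 1)⌋ = k⌊nα⌋ + n + ⌊k{nα}⌋`, the last term rises from `0` to `k - 1` between two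
consecutive jumps. In between, `⌊nα⌋` grows by `1` at each index, so `k - 1` is the excess of
`⌊n(kα + 1)⌋` over a progression of step `k + 1`. As its steps are `k + 1` or `k + 2`, this excess
counts the latter.
-/

open Finset

lemma alphaK_le (k : ℕ) : alphaK k ≤ 1 + 1 / (k : ℝ) := by
  have hsqrt : √(1 + 4 / (k : ℝ)) ≤ 1 + 4 / (k : ℝ) / 2 :=
    Real.sqrt_one_add_le (by linarith [show (0 : ℝ) ≤ 4 / k by positivity])
  unfold alphaK
  linear_combination hsqrt / 2

lemma sum_eq_card_mul_add_card_filter {ι R : Type*} [Ring R] [Nontrivial R] [DecidableEq R]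
    (s : Finset ι) (g : ι → R) (m : R) (hg : ∀ j ∈ s, g j = m ∨ g j = m + 1) :
    ∑ j ∈ s, g j = #s * m + #{j ∈ s | g j = m + 1} := by
  have hsplit : ∀ j ∈ s, g j = m + if g j = m + 1 then 1 else 0 := by
    intro j hj
    rcases hg j hj with h | h <;> simp [h]
  rw [sum_congr rfl hsplit, sum_add_distrib, sum_const, nsmul_eq_mul, sum_boole]

/-- The difference at `n` of the Beatty sequence `⌊n * x⌋`, so that `cSeq` and `dSeq` are the
cases `x = alphaK k` and `x = betaK k`. By truncated subtraction its value at `n = 0` is `0`. -/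
noncomputable def beattyDiff (x : ℝ) (n : ℕ) : ℤ := ⌊(n : ℝ) * x⌋ - ⌊((n - 1 : ℕ) : ℝ) * x⌋

section beattyDiff

variable {x : ℝ} {n : ℕ}

lemma beattyDiff_succ (x : ℝ) (n : ℕ) :
    beattyDiff x (n + 1) = ⌊(n : ℝ) * x + x⌋ - ⌊(n : ℝ) * x⌋ := by
  simp [beattyDiff, add_one_mul]

lemma fract_succ_mul (x : ℝ) (n : ℕ) :
    Int.fract (((n + 1 : ℕ) : ℝ) * x) = Int.fract (n * x) + x - beattyDiff x (n + 1) := by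
  rw [beattyDiff_succ]
  simp only [Int.fract, Nat.cast_succ, add_one_mul, Int.cast_sub]
  ring

lemma beattyDiff_succ_lt (x : ℝ) (n : ℕ) : beattyDiff x (n + 1) < x + 1 := by
  linarith [fract_succ_mul x n, Int.fract_lt_one (n * x), Int.fract_nonneg (((n + 1 : ℕ) : ℝ) * x)]

lemma beattyDiff_eq_or_eq {m : ℤ} (hmx : m ≤ x) (hxm : x ≤ m + 1) (hn : 1 ≤ n) :
    beattyDiff x n = m ∨ beattyDiff x n = m + 1 := by
  obtain ⟨n, rfl⟩ := Nat.exists_eq_add_of_le' hn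
  have hlower : ⌊(n : ℝ) * x⌋ + m ≤ ⌊(n : ℝ) * x + x⌋ := by
    rw [← Int.floor_add_intCast]
    gcongr
  have hupper : ⌊(n : ℝ) * x + x⌋ ≤ ⌊(n : ℝ) * x⌋ + (m + 1) := by
    rw [← Int.floor_add_intCast]
    push_cast
    gcongr
  rw [beattyDiff_succ]
  lia

lemma sum_Ioc_beattyDiff (x : ℝ) {p q : ℕ} (hpq : p ≤ q) :
    ∑ j ∈ Ioc p q, beattyDiff x j = ⌊(q : ℝ) * x⌋ - ⌊(p : ℝ) * x⌋ := by
  induction q, hpq using Nat.le_induction with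
  | base => simp
  | succ q hpq ih =>
    rw [sum_Ioc_succ_top hpq, ih, beattyDiff_succ, Nat.cast_succ, add_one_mul]
    ring

lemma card_filter_Ioc_beattyDiff {m : ℤ} (hmx : m ≤ x) (hxm : x ≤ m + 1) {p q : ℕ} (hpq : p ≤ q) :
    (#{j ∈ Ioc p q | beattyDiff x j = m + 1} : ℤ) =
      ⌊(q : ℝ) * x⌋ - ⌊(p : ℝ) * x⌋ - (q - p) * m := by
  have hsum := sum_eq_card_mul_add_card_filter (Ioc p q) (beattyDiff x) m
    fun j hj ↦ beattyDiff_eq_or_eq hmx hxm (mem_Ioc.mp hj).1.pos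
  rw [sum_Ioc_beattyDiff x hpq, Nat.card_Ioc, Nat.cast_sub hpq] at hsum
  linarith

lemma floor_mul_sub_floor_mul_of_beattyDiff_ne {m : ℤ} (hmx : m ≤ x) (hxm : x ≤ m + 1)
    {p q : ℕ} (hpq : p ≤ q) (hne : ∀ j ∈ Ioc p q, beattyDiff x j ≠ m + 1) :
    ⌊(q : ℝ) * x⌋ - ⌊(p : ℝ) * x⌋ = (q - p) * m := by
  have hcount := card_filter_Ioc_beattyDiff hmx hxm hpq
  rw [filter_eq_empty_iff.mpr hne, card_empty, Nat.cast_zero] at hcount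
  linarith

end beattyDiff

section

variable {k : ℕ} {α : ℝ} {n : ℕ}

lemma floor_mul_mul_add_one (k : ℕ) (α : ℝ) (n : ℕ) :
    ⌊(n : ℝ) * (k * α + 1)⌋ = k * ⌊(n : ℝ) * α⌋ + n + ⌊k * Int.fract (n * α)⌋ := by
  rw [← Int.floor_intCast_add]
  congr 1
  push_cast [Int.fract]
  ring

lemma floor_succ_mul_of_beattyDiff_eq_two (hk : 0 < k) (hα : k * (α - 1) ≤ 1)
    (hdiff : beattyDiff α (n + 1) = 2) :
    ⌊((n + 1 : ℕ) : ℝ) * (k * α + 1)⌋ = k * ⌊((n + 1 : ℕ) : ℝ) * α⌋ + (n + 1 : ℕ) := by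
  have hfract : Int.fract (((n + 1 : ℕ) : ℝ) * α) < α - 1 := by
    rw [fract_succ_mul, hdiff]
    push_cast
    linarith [Int.fract_lt_one (n * α)]
  have hfloor : ⌊k * Int.fract (((n + 1 : ℕ) : ℝ) * α)⌋ = 0 := by
    rw [Int.floor_eq_zero_iff]
    refine ⟨mul_nonneg k.cast_nonneg (Int.fract_nonneg _), ?_⟩
    calc k * Int.fract (((n + 1 : ℕ) : ℝ) * α) < k * (α - 1) := by gcongr
      _ ≤ 1 := hα
  rw [floor_mul_mul_add_one, hfloor, add_zero]

lemma floor_mul_of_beattyDiff_succ_eq_two (hk : 0 < k) (hα : k * (α - 1) ≤ 1)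
    (hdiff : beattyDiff α (n + 1) = 2) :
    ⌊(n : ℝ) * (k * α + 1)⌋ = k * ⌊(n : ℝ) * α⌋ + n + (k - 1) := by
  have hfract : 2 - α ≤ Int.fract (n * α) := by
    have hstep := fract_succ_mul α n
    rw [hdiff] at hstep
    push_cast at hstep
    linarith [Int.fract_nonneg (((n : ℝ) + 1) * α)]
  have hfloor : ⌊k * Int.fract (n * α)⌋ = (k : ℤ) - 1 := by
    rw [Int.floor_eq_iff]
    push_cast
    constructor
    · calc (k : ℝ) - 1 ≤ k * (2 - α) := by linarith
        _ ≤ k * Int.fract (n * α) := by gcongr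
    · calc k * Int.fract (n * α) < k * 1 := by gcongr; exact Int.fract_lt_one _
        _ = k - 1 + 1 := by ring
  rw [floor_mul_mul_add_one, hfloor]

end

theorem count_between_twos_general {k : ℕ} (hk : 1 ≤ k) {α : ℝ} (hα : α ≤ 1 + 1 / k) {p q : ℕ}
    (hp : 1 ≤ p) (hpq : p < q) (hcp : beattyDiff α p = 2) (hcq : beattyDiff α q = 2)
    (hmin : ∀ j : ℕ, p < j → j < q → beattyDiff α j ≠ 2) :
    #{j ∈ Ioo p q | beattyDiff (k * α + 1) j = (k : ℤ) + 2} = k - 1 := by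
  obtain ⟨n, rfl⟩ := Nat.exists_eq_add_of_le' hp
  obtain ⟨r, rfl⟩ := Nat.exists_eq_add_of_le' (hp.trans hpq.le)
  have hnr : n + 1 ≤ r := Nat.le_of_lt_succ hpq
  have hk_cast : (1 : ℝ) ≤ k := mod_cast hk
  have hα_mul : k * (α - 1) ≤ 1 := by
    rw [← le_div_iff₀' (by positivity)]
    linarith
  have hα_gt : 1 < α := by
    have hlt := beattyDiff_succ_lt α n
    rw [hcp] at hlt
    push_cast at hlt
    linarith
  have hα_le : α ≤ 2 := by
    linarith [le_mul_of_one_le_left (sub_nonneg.mpr hα_gt.le) hk_cast]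
  have ha : ⌊(r : ℝ) * α⌋ - ⌊((n + 1 : ℕ) : ℝ) * α⌋ = (r - (n + 1 : ℕ)) * 1 :=
    floor_mul_sub_floor_mul_of_beattyDiff_ne (by simpa using hα_gt.le) (by norm_num [hα_le]) hnr
      fun j hj ↦ hmin j (mem_Ioc.mp hj).1 (Nat.lt_succ_of_le (mem_Ioc.mp hj).2)
  have hcount := card_filter_Ioc_beattyDiff (x := (k : ℝ) * α + 1) (m := (k : ℤ) + 1)
    (by push_cast; gcongr; exact le_mul_of_one_le_right k.cast_nonneg hα_gt.le)
    (by push_cast; linarith) hnr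
  rw [add_assoc (k : ℤ), one_add_one_eq_two, floor_succ_mul_of_beattyDiff_eq_two hk hα_mul hcp,
    floor_mul_of_beattyDiff_succ_eq_two hk hα_mul hcq] at hcount
  rw [Ioo_add_one_right_eq_Ioc]
  zify [hk]
  linear_combination hcount + k * ha

/-- If c_p = c_q = 2 with q > p minimal, then there are exactly k−1
    indices j with p < j < q and d_j = k+2. -/
theorem count_between_twos (k : ℕ) (hk : 1 ≤ k) (p q : ℕ) (hp : 1 ≤ p)
    (hpq : p < q) (hcp : cSeq k p = 2) (hcq : cSeq k q = 2)
    (hmin : ∀ j : ℕ, p < j → j < q → cSeq k j ≠ 2) :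
    ((Finset.Ioo p q).filter (fun j => dSeq k j = (k : ℤ) + 2)).card = k - 1 := by
  exact count_between_twos_general hk (alphaK_le k) hp hpq hcp hcq hmin
end

section
/- Let k ≥ 1 be an integer, α = (1+√(1+4/k))/2, β = kα+1, a_n = ⌊nα⌋, b_n = ⌊nβ⌋, c_n = a_n − a_{n−1}, d_n = b_n − b_{n−1}. Then for all n ≥ 1, c_n = 2 if and only if d_n = k+2 and b_n ≡ n (mod k). -/
/-!
For real `x` and `k ≥ 1` one has `⌊x⌋ = ⌊kx⌋ / k` with integer division, and `⌊nβ⌋ = ⌊k(nα)⌋ + n`,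
so `bₙ - n` determines `aₙ`. Since `1 ≤ α < 1 + 1/k`, i.e. `⌊kα⌋ = k`, the integer `⌊k(nα)⌋`
exceeds `⌊k((n - 1)α)⌋` by `k` or `k + 1`. An increment of `k` raises the integer quotient
by exactly one, and an increment of `k + 1` raises it by two precisely when it ends at a multiple
of `k`.
-/

theorem add_one_ediv_eq_add_one_iff {k : ℤ} (hk : 0 < k) (m : ℤ) :
    (m + 1) / k = m / k + 1 ↔ k ∣ m + 1 := by
  constructor
  · intro h
    have lower : k * (m / k + 1) ≤ m + 1 := h ▸ Int.mul_ediv_self_le hk.ne'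
    have upper : m < k * (m / k) + k := Int.lt_mul_ediv_self_add hk
    exact ⟨m / k + 1, by linarith⟩
  · rintro ⟨t, ht⟩
    obtain rfl : m = -1 + k * t := by linarith
    rw [ht, Int.mul_ediv_cancel_left t hk.ne', Int.add_mul_ediv_left _ _ hk.ne',
      Int.neg_one_ediv, Int.sign_eq_one_of_pos hk]
    ring

theorem ediv_sub_ediv_eq_two_iff {k p q : ℤ} (hk : 0 < k) (hpq : p = q + k ∨ p = q + k + 1) :
    p / k - q / k = 2 ↔ p - q = k + 1 ∧ k ∣ p := by
  have ediv_add_self (m : ℤ) : (m + k) / k = m / k + 1 := by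
    rw [Int.add_ediv_of_dvd_right dvd_rfl, Int.ediv_self hk.ne']
  rcases hpq with rfl | rfl
  · rw [ediv_add_self]
    lia
  · rw [add_right_comm, ediv_add_self, dvd_add_self_right, ← add_one_ediv_eq_add_one_iff hk]
    lia

section FloorRing

variable {R : Type*} [CommRing R] [LinearOrder R] [IsStrictOrderedRing R] [FloorRing R]

theorem floor_add_eq_or (x y : R) : ⌊x + y⌋ = ⌊x⌋ + ⌊y⌋ ∨ ⌊x + y⌋ = ⌊x⌋ + ⌊y⌋ + 1 := by
  have lower := Int.le_floor_add x y
  have upper := Int.le_floor_add_floor x y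
  lia

theorem floor_add_sub_floor_eq_two_iff {k : ℕ} (hk : k ≠ 0) {α : R} (hα : ⌊k * α⌋ = k) (x : R) :
    ⌊x + α⌋ - ⌊x⌋ = 2 ↔
      ⌊k * (x + α)⌋ - ⌊k * x⌋ = (k : ℤ) + 1 ∧ (k : ℤ) ∣ ⌊k * (x + α)⌋ := by
  have increment := floor_add_eq_or (k * x) (k * α)
  rw [← mul_add, hα] at increment
  rw [← ediv_sub_ediv_eq_two_iff (by positivity) increment,
    Int.natCast_mul_floor_div_cancel hk, Int.natCast_mul_floor_div_cancel hk]

theorem c_eq_two_iff_general {k : ℕ} (hk : k ≠ 0) {α : R} (hα : ⌊k * α⌋ = k) (n : ℤ) :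
    ⌊n * α⌋ - ⌊(n - 1) * α⌋ = 2 ↔
      ⌊n * (k * α + 1)⌋ - ⌊(n - 1) * (k * α + 1)⌋ = (k : ℤ) + 2 ∧
        ⌊n * (k * α + 1)⌋ ≡ n [ZMOD k] := by
  have floor_mul_beta (m : ℤ) : ⌊m * (k * α + 1)⌋ = ⌊k * (m * α)⌋ + m := by
    rw [← Int.floor_add_intCast]
    ring_nf
  have cast_pred : ((n - 1 : ℤ) : R) = n - 1 := by push_cast; rfl
  have add_step : ((n - 1 : ℤ) : R) * α + α = n * α := by rw [cast_pred]; ring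
  have floor_step_iff := floor_add_sub_floor_eq_two_iff hk hα ((n - 1 : ℤ) * α)
  rw [add_step] at floor_step_iff
  rw [← cast_pred, floor_step_iff, floor_mul_beta, floor_mul_beta,
    Int.modEq_comm, Int.modEq_iff_dvd, add_sub_cancel_right]
  exact and_congr_left' (by lia)

end FloorRing

theorem floor_natCast_mul_alphaK {k : ℕ} (hk : k ≠ 0) : ⌊(k : ℝ) * alphaK k⌋ = k := by
  have hk₀ : (0 : ℝ) < k := by positivity
  have one_le_sqrt : 1 ≤ √(1 + 4 / (k : ℝ)) :=
    Real.one_le_sqrt.mpr (le_add_of_nonneg_right (by positivity))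
  have sqrt_lt : √(1 + 4 / (k : ℝ)) < 1 + 2 / k := by
    rw [Real.sqrt_lt' (by positivity)]
    calc 1 + 4 / (k : ℝ) < 1 + 4 / k + (2 / k) ^ 2 := lt_add_of_pos_right _ (by positivity)
      _ = (1 + 2 / k) ^ 2 := by ring
  rw [Int.floor_eq_iff, alphaK, Int.cast_natCast]
  constructor
  · exact le_mul_of_one_le_right hk₀.le (by linarith)
  · calc (k : ℝ) * ((1 + √(1 + 4 / k)) / 2) < k * ((1 + (1 + 2 / k)) / 2) := by gcongr
      _ = k + 1 := by field_simp; ring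

/-- c_n = 2 iff d_n = k+2 and b_n ≡ n (mod k). -/
theorem c_eq_two_iff (k : ℕ) (hk : 1 ≤ k) (n : ℕ) (hn : 1 ≤ n) :
    cSeq k n = 2 ↔ (dSeq k n = (k : ℤ) + 2 ∧ bSeq k n ≡ (n : ℤ) [ZMOD (k : ℤ)]) := by
  have hk₀ : k ≠ 0 := Nat.one_le_iff_ne_zero.mp hk
  simpa [aSeq, bSeq, cSeq, dSeq, betaK, hn] using
    c_eq_two_iff_general hk₀ (floor_natCast_mul_alphaK hk₀) n
end
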